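/- arXiv:1801.00673 — 2 statements merged into one kernel-verified Lean document; each statement's English description precedes it below -/
import Mathlib

section
/- Corollary of the sparse Gram estimate (core of Lemma 3.1, the interpolation error estimate): Let E be a real inner product space, s a finite index set, (v_i)_{i∈s} vectors in E and (c_i)_{i∈s} real coefficients. Suppose there is K ∈ ℕ such that for every i ∈ s the number of indices j ∈ s with ⟨v_i, v_j⟩ ≠ 0 is at most K, that |c_i| ≤ M for all i ∈ s, and that Σ_{i∈s} ‖v_i‖² ≤ tol². Then ‖Σ_{i∈s} c_i v_i‖² ≤ K · M² · tol². -/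
open RealInnerProductSpace

/-- Corollary of the sparse Gram estimate (core of the interpolation error
estimate): if each vector `v i` is non-orthogonal to at most `K` of the
vectors `v j`, the coefficients satisfy `|c i| ≤ M`, and
`∑ ‖v i‖² ≤ tol²`, then `‖∑ c i • v i‖² ≤ K · M² · tol²`. -/
theorem sparse_gram_corollary
    {E : Type*} [NormedAddCommGroup E] [InnerProductSpace ℝ E]
    {ι : Type*} [DecidableEq ι] (s : Finset ι) (v : ι → E) (c : ι → ℝ)
    (K : ℕ) (M tol : ℝ) (hM : 0 ≤ M) (htol : 0 ≤ tol)
    (hK : ∀ i ∈ s, (s.filter fun j => ⟪v i, v j⟫ ≠ (0 : ℝ)).card ≤ K)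
    (hc : ∀ i ∈ s, |c i| ≤ M)
    (hsum : ∑ i ∈ s, ‖v i‖ ^ 2 ≤ tol ^ 2) :
    ‖∑ i ∈ s, c i • v i‖ ^ 2 ≤ (K : ℝ) * M ^ 2 * tol ^ 2 := by
  have hterm : ∀ i ∈ s, ∀ j ∈ s, c i * (c j * ⟪v i, v j⟫) ≤
      (if ⟪v i, v j⟫ ≠ (0 : ℝ) then M ^ 2 * ‖v i‖ ^ 2 / 2 else 0) +
      (if ⟪v j, v i⟫ ≠ (0 : ℝ) then M ^ 2 * ‖v j‖ ^ 2 / 2 else 0) := by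
    intro i hi j hj
    rw [real_inner_comm (v i) (v j)]
    by_cases h : ⟪v i, v j⟫ = (0 : ℝ)
    · simp [h]
    · simp only [ne_eq, h, not_false_eq_true, if_true]
      have h1 : |c i| * |c j| ≤ M * M :=
        mul_le_mul (hc i hi) (hc j hj) (abs_nonneg _) hM
      have h2 : |⟪v i, v j⟫| ≤ ‖v i‖ * ‖v j‖ := abs_real_inner_le_norm _ _
      have h3 : c i * (c j * ⟪v i, v j⟫) ≤ (|c i| * |c j|) * |⟪v i, v j⟫| := by
        rw [← abs_mul, ← abs_mul, ← mul_assoc]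
        exact le_abs_self _
      have h4 : (|c i| * |c j|) * |⟪v i, v j⟫| ≤ (M * M) * (‖v i‖ * ‖v j‖) :=
        mul_le_mul h1 h2 (abs_nonneg _) (by positivity)
      nlinarith [mul_nonneg (mul_nonneg hM hM) (sq_nonneg (‖v i‖ - ‖v j‖))]
  have hrow : ∑ i ∈ s, ∑ j ∈ s,
      (if ⟪v i, v j⟫ ≠ (0 : ℝ) then M ^ 2 * ‖v i‖ ^ 2 / 2 else 0) ≤
      (K : ℝ) * M ^ 2 * tol ^ 2 / 2 := by
    calc _ ≤ ∑ i ∈ s, (K : ℝ) * (M ^ 2 * ‖v i‖ ^ 2 / 2) := by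
          refine Finset.sum_le_sum fun i hi => ?_
          rw [← Finset.sum_filter, Finset.sum_const, nsmul_eq_mul]
          exact mul_le_mul_of_nonneg_right (by exact_mod_cast hK i hi) (by positivity)
      _ = (K : ℝ) * M ^ 2 / 2 * ∑ i ∈ s, ‖v i‖ ^ 2 := by
          rw [Finset.mul_sum]
          exact Finset.sum_congr rfl fun i _ => by ring
      _ ≤ (K : ℝ) * M ^ 2 / 2 * tol ^ 2 := mul_le_mul_of_nonneg_left hsum (by positivity)
      _ = _ := by ring
  have hexp : ‖∑ i ∈ s, c i • v i‖ ^ 2 = ∑ i ∈ s, ∑ j ∈ s, c i * (c j * ⟪v i, v j⟫) := by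
    rw [← real_inner_self_eq_norm_sq, sum_inner]
    refine Finset.sum_congr rfl fun i _ => ?_
    rw [inner_sum]
    refine Finset.sum_congr rfl fun j _ => ?_
    rw [real_inner_smul_left, real_inner_smul_right]
  rw [hexp]
  have hle := Finset.sum_le_sum fun i hi => Finset.sum_le_sum fun j hj => hterm i hi j hj
  refine hle.trans ?_
  simp only [Finset.sum_add_distrib]
  have hcomm := Finset.sum_comm (s := s) (t := s) (f := fun i j =>
    (if ⟪v j, v i⟫ ≠ (0 : ℝ) then M ^ 2 * ‖v j‖ ^ 2 / 2 else 0))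
  rw [hcomm]
  linarith
end

section
/- Regularity of uniform B-splines: Let h > 0, x_i = i·h for i ∈ ℤ, and let φ : ℤ → ℕ → ℝ → ℝ satisfy the Cox–de Boor recursion φ_{i,p}(x) = ((x − x_i)/(p h)) φ_{i,p−1}(x) + ((x_{i+p+1} − x)/(p h)) φ_{i+1,p−1}(x) for p ≥ 1, with φ_{i,0} the indicator function of [x_i, x_{i+1}). Then for every p ≥ 1 and every i ∈ ℤ, the function φ_{i,p} : ℝ → ℝ is of class C^{p−1} on all of ℝ. -/
/-- Regularity of uniform B-splines: the B-spline `φ i p` of order `p ≥ 1`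
defined by the Cox–de Boor recursion on the uniform knots `xᵢ = i h` is of
class `C^{p−1}` on all of `ℝ`. -/
theorem bspline_regularity
    (h : ℝ) (hh : 0 < h) (φ : ℤ → ℕ → ℝ → ℝ)
    (hbase : ∀ (i : ℤ) (x : ℝ),
      φ i 0 x = if x ∈ Set.Ico ((i : ℝ) * h) (((i : ℝ) + 1) * h) then 1 else 0)
    (hrec : ∀ (i : ℤ) (p : ℕ) (x : ℝ),
      φ i (p + 1) x =
        ((x - (i : ℝ) * h) / (((p : ℝ) + 1) * h)) * φ i p x
        + ((((i : ℝ) + (p : ℝ) + 2) * h - x) / (((p : ℝ) + 1) * h)) * φ (i + 1) p x) :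
    ∀ p : ℕ, 1 ≤ p → ∀ i : ℤ, ContDiff ℝ ((p - 1 : ℕ) : ℕ∞) (φ i p) := by
  have hh0 : h ≠ 0 := hh.ne'
  -- right derivatives at order zero
  have hr0 : ∀ (i : ℤ) (x : ℝ), HasDerivWithinAt (φ i 0) 0 (Set.Ioi x) x := by
    intro i x
    have key : φ i 0 =ᶠ[nhdsWithin x (Set.Ioi x)] fun _ => φ i 0 x := by
      rcases lt_or_ge x ((i : ℝ) * h) with h1 | h1
      · filter_upwards [Ioo_mem_nhdsGT h1] with y hy
        rw [hbase, hbase, if_neg (fun hc => absurd hc.1 (not_le.2 hy.2)),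
          if_neg (fun hc => absurd hc.1 (not_le.2 h1))]
      · rcases lt_or_ge x (((i : ℝ) + 1) * h) with h2 | h2
        · filter_upwards [Ioo_mem_nhdsGT h2] with y hy
          rw [hbase, hbase, if_pos ⟨h1.trans hy.1.le, hy.2⟩, if_pos ⟨h1, h2⟩]
        · filter_upwards [self_mem_nhdsWithin] with y hy
          rw [hbase, hbase, if_neg (fun hc => absurd hc.2 (not_lt.2 (h2.trans (le_of_lt hy)))),
            if_neg (fun hc => absurd hc.2 (not_lt.2 h2))]
    exact (hasDerivWithinAt_const x (Set.Ioi x) (φ i 0 x)).congr_of_eventuallyEq key rfl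
  have hfun : ∀ (i : ℤ) (p : ℕ), φ i (p + 1) = fun x =>
        ((x - (i : ℝ) * h) / (((p : ℝ) + 1) * h)) * φ i p x
        + ((((i : ℝ) + (p : ℝ) + 2) * h - x) / (((p : ℝ) + 1) * h)) * φ (i + 1) p x :=
    fun i p => funext (hrec i p)
  have hstep : ∀ (p : ℕ) (i : ℤ) (x a b : ℝ), HasDerivWithinAt (φ i p) a (Set.Ioi x) x →
      HasDerivWithinAt (φ (i + 1) p) b (Set.Ioi x) x →
      HasDerivWithinAt (φ i (p + 1))
        ((1 / (((p : ℝ) + 1) * h)) * φ i p x + ((x - (i : ℝ) * h) / (((p : ℝ) + 1) * h)) * a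
        + (((-1) / (((p : ℝ) + 1) * h)) * φ (i + 1) p x
          + ((((i : ℝ) + (p : ℝ) + 2) * h - x) / (((p : ℝ) + 1) * h)) * b)) (Set.Ioi x) x := by
    intro p i x a b ha hb
    rw [hfun]
    have e1 := (((hasDerivWithinAt_id x (Set.Ioi x)).sub_const ((i : ℝ) * h)).div_const
      (((p : ℝ) + 1) * h)).mul ha
    have e2 := (((hasDerivWithinAt_id x (Set.Ioi x)).const_sub
      (((i : ℝ) + (p : ℝ) + 2) * h)).div_const (((p : ℝ) + 1) * h)).mul hb
    exact e1.add e2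
  have hright : ∀ (p : ℕ) (i : ℤ) (x : ℝ),
      HasDerivWithinAt (φ i (p + 1)) ((φ i p x - φ (i + 1) p x) / h) (Set.Ioi x) x := by
    intro p
    induction p with
    | zero =>
      intro i x
      convert hstep 0 i x 0 0 (hr0 i x) (hr0 (i + 1) x) using 1
      push_cast
      field_simp
      ring
    | succ p ih =>
      intro i x
      convert hstep (p + 1) i x _ _ (ih i x) (ih (i + 1) x) using 1
      have hp : (p : ℝ) + 1 ≠ 0 := by positivity
      have hp2 : (p : ℝ) + 1 + 1 ≠ 0 := by positivity
      rw [hrec i p x, hrec (i + 1) p x]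
      push_cast
      field_simp
      ring
  have hcont : ∀ (p : ℕ) (i : ℤ), Continuous (φ i (p + 1)) := by
    intro p
    induction p with
    | zero =>
      intro i
      have : φ i (0 + 1) = fun x =>
          max 0 (min (x - (i : ℝ) * h) (((i : ℝ) + 2) * h - x)) / h := by
        funext x
        rw [hrec, hbase, hbase]
        simp only [Set.mem_Ico]
        push_cast
        rcases lt_or_ge x ((i : ℝ) * h) with h1 | h1
        · rw [if_neg (fun hc => by linarith [hc.1]), if_neg (fun hc => by nlinarith [hc.1]),
            max_eq_left ((min_le_left _ _).trans (by linarith))]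
          simp
        rcases lt_or_ge x (((i : ℝ) + 1) * h) with h2 | h2
        · rw [if_pos ⟨h1, h2⟩, if_neg (fun hc => by linarith [hc.1]),
            min_eq_left (by linarith), max_eq_right (by linarith)]
          simp
        rcases lt_or_ge x (((i : ℝ) + 1 + 1) * h) with h3 | h3
        · rw [if_neg (fun hc => by linarith [hc.2]), if_pos ⟨h2, h3⟩,
            min_eq_right (by linarith), max_eq_right (by linarith)]
          simp
        · rw [if_neg (fun hc => by linarith [hc.2]), if_neg (fun hc => by linarith [hc.2]),
            max_eq_left ((min_le_right _ _).trans (by linarith))]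
          simp
      rw [this]
      fun_prop
    | succ p ih =>
      intro i
      have c1 := ih i
      have c2 := ih (i + 1)
      rw [hfun i (p + 1)]
      fun_prop
  have hderiv : ∀ (p : ℕ) (i : ℤ) (x : ℝ),
      HasDerivAt (φ i (p + 2)) ((φ i (p + 1) x - φ (i + 1) (p + 1) x) / h) x := by
    intro p i x
    have c1 := hcont p i
    have c2 := hcont p (i + 1)
    have cg : Continuous fun y => (φ i (p + 1) y - φ (i + 1) (p + 1) y) / h := by fun_prop
    have hint : φ i (p + 2) = fun y => φ i (p + 2) 0 +
        ∫ t in (0 : ℝ)..y, (φ i (p + 1) t - φ (i + 1) (p + 1) t) / h := by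
      funext y
      rw [intervalIntegral.integral_eq_sub_of_hasDeriv_right (hcont (p + 1) i).continuousOn
        (fun t _ => hright (p + 1) i t) (cg.intervalIntegrable _ _)]
      ring
    rw [hint]
    exact (cg.integral_hasStrictDerivAt 0 x).hasDerivAt.const_add _
  have main : ∀ (p : ℕ) (i : ℤ), ContDiff ℝ (p : WithTop ℕ∞) (φ i (p + 1)) := by
    intro p
    induction p with
    | zero =>
      intro i
      simpa using (contDiff_zero (𝕜 := ℝ)).2 (hcont 0 i)
    | succ p ih =>
      intro i
      have hd : deriv (φ i (p + 2)) = fun y => (φ i (p + 1) y - φ (i + 1) (p + 1) y) / h :=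
        funext fun y => (hderiv p i y).deriv
      push_cast
      rw [contDiff_succ_iff_deriv]
      refine ⟨fun y => (hderiv p i y).differentiableAt, by simp, ?_⟩
      change ContDiff ℝ _ (deriv (φ i (p + 2)))
      rw [hd]
      exact ((ih i).sub (ih (i + 1))).div_const h
  intro p hp i
  obtain ⟨q, rfl⟩ : ∃ q, p = q + 1 := ⟨p - 1, by omega⟩
  simpa using main q i
end
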